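/- Under the Entropy Setup, consider G(ρ,u) = η̌_ρ(ρ,ρu) + u η̌_m(ρ,ρu) as a function of the variables (ρ,u) with ρ > 0, u ∈ ℝ. Then there exists a constant M > 0 depending only on γ such that |∂_ρ G(ρ,u)| ≤ M(ρ^{θ−1}|u| + ρ^{2θ−1}) and |∂_u G(ρ,u)| ≤ M(|u| + ρ^θ) for all ρ > 0 and u ∈ ℝ. -/

import Mathlib

open MeasureTheory Real Set

noncomputable section

/-- The Lions–Perthame–Tadmor weak entropy
`η̌(ρ,m) = ∫_ℝ ½ s|s| [ρ^{2θ} − (m/ρ−s)²]_+^{(3−γ)/(2(γ−1))} ds`, with `2θ = γ−1`. -/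
def etaCheck (γ ρ m : ℝ) : ℝ :=
  ∫ s : ℝ, (1/2) * s * |s| *
    (max (ρ ^ (γ - 1) - (m / ρ - s) ^ (2:ℕ)) 0) ^ ((3 - γ) / (2 * (γ - 1)))

/-- The associated weak entropy flux
`q̌(ρ,m) = ∫_ℝ ½ s|s| (θs + (1−θ)m/ρ) [ρ^{2θ} − (m/ρ−s)²]_+^{(3−γ)/(2(γ−1))} ds`. -/
def qCheck (γ ρ m : ℝ) : ℝ :=
  ∫ s : ℝ, (1/2) * s * |s| * (((γ - 1)/2) * s + (1 - (γ - 1)/2) * (m / ρ)) *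
    (max (ρ ^ (γ - 1) - (m / ρ - s) ^ (2:ℕ)) 0) ^ ((3 - γ) / (2 * (γ - 1)))

/-- Partial derivative `η̌_ρ` in the variables `(ρ,m)`. -/
def etaCheckRho (γ ρ m : ℝ) : ℝ := deriv (fun x => etaCheck γ x m) ρ

/-- Partial derivative `η̌_m` in the variables `(ρ,m)`. -/
def etaCheckM (γ ρ m : ℝ) : ℝ := deriv (fun y => etaCheck γ ρ y) m

/-- The modified entropy `η̃(ρ,m) = η̌(ρ,m) − η̌_ρ(ρ̄,0)(ρ−ρ̄) − η̌_m(ρ̄,0)m`. -/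
def etaTilde (γ ρbar ρ m : ℝ) : ℝ :=
  etaCheck γ ρ m - etaCheckRho γ ρbar 0 * (ρ - ρbar) - etaCheckM γ ρbar 0 * m

/-- The modified entropy flux
`q̃(ρ,m) = q̌(ρ,m) − η̌_ρ(ρ̄,0)m − η̌_m(ρ̄,0)(m²/ρ + p(ρ))`, `p(ρ) = κρ^γ`. -/
def qTilde (γ κ ρbar ρ m : ℝ) : ℝ :=
  qCheck γ ρ m - etaCheckRho γ ρbar 0 * m
    - etaCheckM γ ρbar 0 * (m ^ (2:ℕ) / ρ + κ * ρ ^ γ)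

/-- `η̃_ρ` in the variables `(ρ,m)`. -/
def etaTildeRho (γ ρbar ρ m : ℝ) : ℝ := deriv (fun x => etaTilde γ ρbar x m) ρ

/-- `η̃_m` in the variables `(ρ,m)`. -/
def etaTildeM (γ ρbar ρ m : ℝ) : ℝ := deriv (fun y => etaTilde γ ρbar ρ y) m

/-- `G(ρ,u) = η̌_ρ(ρ,ρu) + u η̌_m(ρ,ρu)` as a function of `(ρ,u)`. -/
def Gfun (γ ρ u : ℝ) : ℝ := etaCheckRho γ ρ (ρ * u) + u * etaCheckM γ ρ (ρ * u)

/-!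
By the chain rule `G(ρ, u) = ∂_ρ [η̌(ρ, ρu)]`, and the substitution `s = u + ρ^θ t` turns the
entropy into `η̌(ρ, ρu) = ρ E(u, ρ^θ)`, where `E(u, r)` is the integral of `½ s|s|`, `s = u + r t`,
against the finite measure `(1 - t²)^λ dt` on `[-1, 1]`. Hence `G = E + θ r ∂_r E` at `r = ρ^θ`, and
since `r t |s| = s|s| - u|s|` this equals `(1 + 2θ) E - θ u ∫ |s|`. The measure has no atoms, so
`∫ |s|` is differentiable in `(u, r)` for `r ≠ 0` although `|s|` is not differentiable at `0`; the
first derivatives of `G` in `(u, r)` are then `O(|u| + r)` because `|s| ≤ |u| + r`. The power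
`ρ^(θ - 1)` in the density derivative comes from `dr/dρ`.
-/

open Topology
open scoped NNReal

section AffineMean

variable {μ : Measure ℝ} {f : ℝ → ℝ} {R u r : ℝ}

/-- The integral `∫ f(u + r t) dμ(t)`: up to the total mass of `μ`, the mean of `f` against the
image of `μ` under the affine map `t ↦ u + r t`. -/
def affineMean (μ : Measure ℝ) (f : ℝ → ℝ) (u r : ℝ) : ℝ := ∫ t, f (u + r * t) ∂μ

lemma abs_add_mul_le (p : ℝ × ℝ) (t : ℝ) : |p.1 + p.2 * t| ≤ (1 + |t|) * ‖p‖ :=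
  calc |p.1 + p.2 * t| ≤ |p.1| + |p.2| * |t| := (abs_add_le _ _).trans_eq (by rw [abs_mul])
    _ ≤ ‖p‖ + ‖p‖ * |t| := by gcongr; exacts [norm_fst_le p, norm_snd_le p]
    _ = (1 + |t|) * ‖p‖ := by ring

lemma integrable_comp_add_mul [IsFiniteMeasure μ] (hμ : ∀ᵐ t ∂μ, |t| ≤ R) (hf : Continuous f)
    (u r : ℝ) : Integrable (fun t ↦ f (u + r * t)) μ := by
  obtain ⟨C, hC⟩ := isCompact_Icc.exists_bound_of_continuousOn
    (f := fun t ↦ f (u + r * t)) (s := Icc (-R) R) (by fun_prop)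
  refine .of_bound (Measurable.aestronglyMeasurable (by fun_prop)) C ?_
  filter_upwards [hμ] with t ht using hC t (abs_le.mp ht)

lemma exists_norm_comp_add_mul_sub_le (hf : LocallyLipschitz f) (R : ℝ) (p : ℝ × ℝ) :
    ∃ K : ℝ≥0, ∀ t, |t| ≤ R → ∀ q ∈ Metric.closedBall p 1,
      ‖f (q.1 + q.2 * t) - f (p.1 + p.2 * t)‖ ≤ K * (1 + |t|) * ‖q - p‖ := by
  obtain ⟨K, hK⟩ := (hf.locallyLipschitzOn (s := Metric.closedBall 0 ((1 + R) * (‖p‖ + 1))))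
    |>.exists_lipschitzOnWith_of_compact (isCompact_closedBall _ _)
  refine ⟨K, fun t ht q hq ↦ ?_⟩
  have mem_closedBall : ∀ q' ∈ Metric.closedBall p 1,
      q'.1 + q'.2 * t ∈ Metric.closedBall 0 ((1 + R) * (‖p‖ + 1)) := fun q' hq' ↦ by
    have : 0 ≤ 1 + R := by linarith [abs_nonneg t]
    have : ‖q'‖ ≤ ‖p‖ + 1 := norm_le_of_mem_closedBall hq'
    rw [mem_closedBall_zero_iff]
    exact (abs_add_mul_le q' t).trans (by gcongr)
  calc ‖f (q.1 + q.2 * t) - f (p.1 + p.2 * t)‖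
      ≤ K * ‖q.1 + q.2 * t - (p.1 + p.2 * t)‖ :=
        hK.norm_sub_le (mem_closedBall q hq)
          (mem_closedBall p (Metric.mem_closedBall_self zero_le_one))
    _ = K * |(q - p).1 + (q - p).2 * t| := by
        rw [Real.norm_eq_abs, Prod.fst_sub, Prod.snd_sub]; ring_nf
    _ ≤ K * ((1 + |t|) * ‖q - p‖) := by gcongr; exact abs_add_mul_le _ t
    _ = K * (1 + |t|) * ‖q - p‖ := by ring

lemma hasFDerivAt_affineMean [IsFiniteMeasure μ] (hμ : ∀ᵐ t ∂μ, |t| ≤ R)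
    (hf : LocallyLipschitz f) (p : ℝ × ℝ)
    (hd : ∀ᵐ t ∂μ, DifferentiableAt ℝ f (p.1 + p.2 * t)) :
    HasFDerivAt (fun q : ℝ × ℝ ↦ affineMean μ f q.1 q.2)
      (affineMean μ (deriv f) p.1 p.2 • .fst ℝ ℝ ℝ
        + (∫ t, t * deriv f (p.1 + p.2 * t) ∂μ) • .snd ℝ ℝ ℝ) p := by
  obtain ⟨K, hK⟩ := exists_norm_comp_add_mul_sub_le hf R p
  let F' (t : ℝ) : ℝ × ℝ →L[ℝ] ℝ := deriv f (p.1 + p.2 * t) • (.fst ℝ ℝ ℝ + t • .snd ℝ ℝ ℝ)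
  have hF' : ∀ᵐ t ∂μ, HasFDerivAt (fun q : ℝ × ℝ ↦ f (q.1 + q.2 * t)) (F' t) p := by
    filter_upwards [hd] with t ht
    exact ht.hasDerivAt.comp_hasFDerivAt p
      (hasFDerivAt_fst.add (hasFDerivAt_snd.mul_const t))
  have F'_measurable : Measurable F' := by
    have := measurable_deriv f
    fun_prop
  have bound_integrable : Integrable (fun t : ℝ ↦ K * (1 + |t|)) μ := by
    simpa using integrable_comp_add_mul (f := fun t ↦ K * (1 + |t|)) hμ (by fun_prop) 0 1
  obtain ⟨F'_integrable, hasFDerivAt⟩ := hasFDerivAt_integral_of_dominated_loc_of_lip'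
    (Metric.closedBall_mem_nhds p one_pos)
    (fun q _ ↦ (hf.continuous.measurable.comp (by fun_prop)).aestronglyMeasurable)
    (integrable_comp_add_mul hμ hf.continuous p.1 p.2) F'_measurable.aestronglyMeasurable
    (hμ.mono hK) bound_integrable hF'
  have integral_F' : ∫ t, F' t ∂μ = affineMean μ (deriv f) p.1 p.2 • .fst ℝ ℝ ℝ
      + (∫ t, t * deriv f (p.1 + p.2 * t) ∂μ) • .snd ℝ ℝ ℝ := by
    ext <;> simp only [ContinuousLinearMap.comp_apply,
      ContinuousLinearMap.integral_apply F'_integrable] <;> simp [F', affineMean, mul_comm]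
  rw [← integral_F']
  exact hasFDerivAt

lemma hasDerivAt_affineMean_left [IsFiniteMeasure μ] (hμ : ∀ᵐ t ∂μ, |t| ≤ R)
    (hf : LocallyLipschitz f) (hd : ∀ᵐ t ∂μ, DifferentiableAt ℝ f (u + r * t)) :
    HasDerivAt (fun v ↦ affineMean μ f v r) (affineMean μ (deriv f) u r) u := by
  simpa [Function.comp_def] using (hasFDerivAt_affineMean hμ hf (u, r) hd).comp_hasDerivAt u
    ((hasDerivAt_id u).prodMk (hasDerivAt_const u r))

lemma hasDerivAt_affineMean_right [IsFiniteMeasure μ] (hμ : ∀ᵐ t ∂μ, |t| ≤ R)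
    (hf : LocallyLipschitz f) (hd : ∀ᵐ t ∂μ, DifferentiableAt ℝ f (u + r * t)) :
    HasDerivAt (affineMean μ f u) (∫ t, t * deriv f (u + r * t) ∂μ) r := by
  simpa [Function.comp_def] using (hasFDerivAt_affineMean hμ hf (u, r) hd).comp_hasDerivAt r
    ((hasDerivAt_const r u).prodMk (hasDerivAt_id r))

lemma abs_integral_mul_comp_add_mul_le [IsFiniteMeasure μ] (hμ : ∀ᵐ t ∂μ, |t| ≤ 1) {g : ℝ → ℝ}
    {C : ℝ} (hg : ∀ t, |t| ≤ 1 → |g t| ≤ 1) (hf : ∀ s, |s| ≤ |u| + |r| → |f s| ≤ C) :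
    |∫ t, g t * f (u + r * t) ∂μ| ≤ C * μ.real univ := by
  rw [← Real.norm_eq_abs]
  refine norm_integral_le_of_norm_le_const ?_
  filter_upwards [hμ] with t ht
  have : |u + r * t| ≤ |u| + |r| := by
    refine (abs_add_le _ _).trans ?_
    rw [abs_mul]
    gcongr
    exact mul_le_of_le_one_right (abs_nonneg r) ht
  rw [Real.norm_eq_abs, abs_mul]
  exact (mul_le_of_le_one_left (abs_nonneg _) (hg t ht)).trans (hf _ this)

end AffineMean

/-- The Lions–Perthame–Tadmor generating function `½ s|s|`. -/
def halfMulAbs (s : ℝ) : ℝ := 1 / 2 * s * |s|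

lemma hasDerivAt_halfMulAbs (s : ℝ) : HasDerivAt halfMulAbs |s| s := by
  rcases eq_or_ne s 0 with rfl | hs
  · have isBigO : halfMulAbs =O[𝓝 0] fun s ↦ s ^ 2 := .of_bound 1 <| .of_forall fun s ↦ by
      rw [halfMulAbs, Real.norm_eq_abs, Real.norm_eq_abs, abs_mul, abs_mul, abs_abs, abs_sq,
        mul_assoc, abs_mul_abs_self, abs_of_pos one_half_pos]
      linarith [sq_nonneg s]
    have isLittleO := isBigO.trans_isLittleO (Asymptotics.isLittleO_pow_id one_lt_two)
    rw [hasDerivAt_iff_isLittleO]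
    simpa [show halfMulAbs 0 = 0 by simp [halfMulAbs]] using isLittleO
  · refine (((hasDerivAt_id' s).const_mul (1 / 2)).mul (hasDerivAt_abs hs)).congr_deriv ?_
    rw [mul_one, mul_assoc, self_mul_sign]
    ring

lemma deriv_halfMulAbs : deriv halfMulAbs = abs :=
  funext fun s ↦ (hasDerivAt_halfMulAbs s).deriv

lemma locallyLipschitz_halfMulAbs : LocallyLipschitz halfMulAbs := by
  refine ContDiff.locallyLipschitz (𝕂 := ℝ) (contDiff_one_iff_deriv.mpr ⟨?_, ?_⟩)
  · exact fun s ↦ (hasDerivAt_halfMulAbs s).differentiableAt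
  · rw [deriv_halfMulAbs]
    exact continuous_abs

section KineticMean

variable {μ : Measure ℝ} {R θ u r : ℝ}

/-- For `E(u, r) = ∫ ½ s|s| dμ(t)` with `s = u + r t`, this is the function `E + θ r ∂_r E`, in
the form `(1 + 2θ) E - θ u ∫ |s| dμ(t)` that results from `r t |s| = s|s| - u|s|`. -/
def kineticMean (μ : Measure ℝ) (θ u r : ℝ) : ℝ :=
  (1 + 2 * θ) * affineMean μ halfMulAbs u r - θ * (u * affineMean μ abs u r)

lemma ae_differentiableAt_abs_add_mul [NullSingletonClass μ] (u : ℝ) (hr : r ≠ 0) :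
    ∀ᵐ t ∂μ, DifferentiableAt ℝ abs (u + r * t) := by
  filter_upwards [μ.ae_ne (-u / r)] with t ht
  refine differentiableAt_abs fun h ↦ ht ?_
  field_simp
  linarith

variable [IsFiniteMeasure μ]

lemma differentiableAt_affineMean_halfMulAbs (hμ : ∀ᵐ t ∂μ, |t| ≤ R) (p : ℝ × ℝ) :
    DifferentiableAt ℝ (fun q : ℝ × ℝ ↦ affineMean μ halfMulAbs q.1 q.2) p :=
  (hasFDerivAt_affineMean hμ locallyLipschitz_halfMulAbs p
    (.of_forall fun _ ↦ (hasDerivAt_halfMulAbs _).differentiableAt)).differentiableAt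

lemma hasDerivAt_affineMean_halfMulAbs_right (hμ : ∀ᵐ t ∂μ, |t| ≤ R) (u r : ℝ) :
    HasDerivAt (affineMean μ halfMulAbs u) (∫ t, t * |u + r * t| ∂μ) r := by
  simpa only [deriv_halfMulAbs] using hasDerivAt_affineMean_right hμ locallyLipschitz_halfMulAbs
    (.of_forall fun t ↦ (hasDerivAt_halfMulAbs _).differentiableAt)

lemma affineMean_add_mul_integral (hμ : ∀ᵐ t ∂μ, |t| ≤ R) (θ u r : ℝ) :
    affineMean μ halfMulAbs u r + θ * (r * ∫ t, t * |u + r * t| ∂μ) = kineticMean μ θ u r := by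
  have radial : r * ∫ t, t * |u + r * t| ∂μ
      = 2 * affineMean μ halfMulAbs u r - u * affineMean μ abs u r := by
    simp only [affineMean, ← integral_const_mul]
    rw [← integral_sub
      ((integrable_comp_add_mul hμ locallyLipschitz_halfMulAbs.continuous u r).const_mul 2)
      ((integrable_comp_add_mul hμ continuous_abs u r).const_mul u)]
    congr 1 with t
    rw [halfMulAbs]
    ring
  rw [radial, kineticMean]
  ring

lemma abs_mul_integral_abs_sub_le (hμ : ∀ᵐ t ∂μ, |t| ≤ 1) (hθ : 0 ≤ θ) {c : ℝ}
    (hc : |c| ≤ 1 + 2 * θ) {g : ℝ → ℝ} (hg : ∀ t, |t| ≤ 1 → |g t| ≤ 1) (u r : ℝ) :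
    |c * (∫ t, g t * |u + r * t| ∂μ) - θ * (u * ∫ t, g t * deriv abs (u + r * t) ∂μ)|
      ≤ (1 + 3 * θ) * μ.real univ * (|u| + |r|) := by
  have abs_mean : |∫ t, g t * |u + r * t| ∂μ| ≤ (|u| + |r|) * μ.real univ :=
    abs_integral_mul_comp_add_mul_le hμ hg fun s hs ↦ (abs_abs s).trans_le hs
  have sign_mean : |∫ t, g t * deriv abs (u + r * t) ∂μ| ≤ 1 * μ.real univ :=
    abs_integral_mul_comp_add_mul_le hμ hg fun s _ ↦ by
      simpa using norm_deriv_le_of_lipschitz (f := abs) (x₀ := s) lipschitzWith_one_norm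
  calc _ ≤ |c| * |∫ t, g t * |u + r * t| ∂μ|
        + θ * (|u| * |∫ t, g t * deriv abs (u + r * t) ∂μ|) := by
        refine (abs_sub _ _).trans_eq ?_
        simp only [abs_mul, abs_of_nonneg hθ]
    _ ≤ (1 + 2 * θ) * ((|u| + |r|) * μ.real univ) + θ * ((|u| + |r|) * (1 * μ.real univ)) := by
        gcongr
        exact le_add_of_nonneg_right (abs_nonneg r)
    _ = (1 + 3 * θ) * μ.real univ * (|u| + |r|) := by ring

variable [NullSingletonClass μ]

lemma hasDerivAt_kineticMean_left (hμ : ∀ᵐ t ∂μ, |t| ≤ R) (θ u : ℝ) (hr : r ≠ 0) :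
    HasDerivAt (fun v ↦ kineticMean μ θ v r)
      ((1 + θ) * affineMean μ abs u r - θ * (u * affineMean μ (deriv abs) u r)) u := by
  have hE := hasDerivAt_affineMean_left (u := u) (r := r) hμ locallyLipschitz_halfMulAbs
    (.of_forall fun _ ↦ (hasDerivAt_halfMulAbs _).differentiableAt)
  rw [deriv_halfMulAbs] at hE
  have hA := hasDerivAt_affineMean_left hμ lipschitzWith_one_norm.locallyLipschitz
    (ae_differentiableAt_abs_add_mul u hr)
  refine ((hE.const_mul (1 + 2 * θ)).sub
    (((hasDerivAt_id' u).mul hA).const_mul θ)).congr_deriv ?_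
  change _ - θ * (1 * affineMean μ abs u r + u * affineMean μ (deriv abs) u r) = _
  ring

lemma hasDerivAt_kineticMean_right (hμ : ∀ᵐ t ∂μ, |t| ≤ R) (θ u : ℝ) (hr : r ≠ 0) :
    HasDerivAt (kineticMean μ θ u)
      ((1 + 2 * θ) * (∫ t, t * |u + r * t| ∂μ)
        - θ * (u * ∫ t, t * deriv abs (u + r * t) ∂μ)) r :=
  ((hasDerivAt_affineMean_halfMulAbs_right hμ u r).const_mul (1 + 2 * θ)).sub
    (((hasDerivAt_affineMean_right hμ lipschitzWith_one_norm.locallyLipschitz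
      (ae_differentiableAt_abs_add_mul u hr)).const_mul u).const_mul θ)

lemma abs_deriv_kineticMean_left_le (hμ : ∀ᵐ t ∂μ, |t| ≤ 1) (hθ : 0 ≤ θ) (u : ℝ) (hr : r ≠ 0) :
    |deriv (fun v ↦ kineticMean μ θ v r) u| ≤ (1 + 3 * θ) * μ.real univ * (|u| + |r|) := by
  rw [(hasDerivAt_kineticMean_left hμ θ u hr).deriv]
  have hc : |1 + θ| ≤ 1 + 2 * θ := by rw [abs_of_nonneg] <;> linarith
  simpa [affineMean] using
    abs_mul_integral_abs_sub_le (g := 1) hμ hθ hc (fun _ _ ↦ abs_one.le) u r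

lemma abs_deriv_kineticMean_right_le (hμ : ∀ᵐ t ∂μ, |t| ≤ 1) (hθ : 0 ≤ θ) (u : ℝ) (hr : r ≠ 0) :
    |deriv (kineticMean μ θ u) r| ≤ (1 + 3 * θ) * μ.real univ * (|u| + |r|) := by
  rw [(hasDerivAt_kineticMean_right hμ θ u hr).deriv]
  have hc : |1 + 2 * θ| ≤ 1 + 2 * θ := (abs_of_nonneg (by positivity)).le
  exact abs_mul_integral_abs_sub_le hμ hθ hc (fun _ ht ↦ ht) u r

end KineticMean

section GegenbauerMeasure

/-- The measure `(1 - t²)^p dt` on `[-1, 1]`, the orthogonality measure of the Gegenbauer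
polynomials. -/
def gegenbauerMeasure (p : ℝ) : Measure ℝ :=
  (volume.restrict (Icc (-1) 1)).withDensity fun t ↦ ENNReal.ofReal ((1 - t ^ 2) ^ p)

variable {p : ℝ}

lemma ae_abs_le_one_gegenbauerMeasure (p : ℝ) : ∀ᵐ t ∂gegenbauerMeasure p, |t| ≤ 1 :=
  (withDensity_absolutelyContinuous _ _).ae_le <|
    (ae_restrict_mem measurableSet_Icc).mono fun _ ht ↦ abs_le.mpr ht

instance : NullSingletonClass (gegenbauerMeasure p) :=
  nullSingletonClass_withDensity _

lemma integrableOn_one_sub_sq_rpow (hp : -1 < p) :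
    IntegrableOn (fun t : ℝ ↦ (1 - t ^ 2) ^ p) (Icc (-1) 1) := by
  have left : IntervalIntegrable (fun t : ℝ ↦ (1 + t) ^ p) volume (-1) 0 := by
    simpa using (intervalIntegral.intervalIntegrable_rpow' (a := 0) (b := 1) hp).comp_add_left 1
  have left_half : IntervalIntegrable (fun t : ℝ ↦ (1 - t ^ 2) ^ p) volume (-1) 0 := by
    refine (left.mul_continuousOn (g := fun t ↦ (1 - t) ^ p) ?_).congr ?_
    · intro t ht
      rw [uIcc_of_le (by norm_num)] at ht
      exact (ContinuousAt.rpow_const (by fun_prop) (.inl (by linarith [ht.2]))).continuousWithinAt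
    · intro t ht
      rw [uIoc_of_le (by norm_num)] at ht
      change (1 + t) ^ p * (1 - t) ^ p = (1 - t ^ 2) ^ p
      rw [← mul_rpow (by linarith [ht.1]) (by linarith [ht.2])]
      ring_nf
  have right_half : IntervalIntegrable (fun t : ℝ ↦ (1 - t ^ 2) ^ p) volume 0 1 := by
    simpa using (left_half.comp_sub_left 0).symm
  rw [← intervalIntegrable_iff_integrableOn_Icc_of_le (by norm_num)]
  exact left_half.trans right_half

lemma isFiniteMeasure_gegenbauerMeasure (hp : -1 < p) :
    IsFiniteMeasure (gegenbauerMeasure p) :=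
  isFiniteMeasure_withDensity_ofReal (integrableOn_one_sub_sq_rpow hp).hasFiniteIntegral

-- As `0 ^ 0 = 1`, at `p = 0` the truncated power is `1` on all of `ℝ`, not only on `[-1, 1]`.
lemma integral_gegenbauerMeasure (hp : p ≠ 0) (f : ℝ → ℝ) :
    ∫ t, f t ∂gegenbauerMeasure p = ∫ t, f t * (max (1 - t ^ 2) 0) ^ p := by
  have weight_measurable : Measurable fun t : ℝ ↦ ENNReal.ofReal ((1 - t ^ 2) ^ p) := by fun_prop
  calc ∫ t, f t ∂gegenbauerMeasure p
      = ∫ t in Icc (-1) 1, (ENNReal.ofReal ((1 - t ^ 2) ^ p)).toReal • f t :=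
        integral_withDensity_eq_integral_toReal_smul weight_measurable
          (.of_forall fun _ ↦ ENNReal.ofReal_lt_top) f
    _ = ∫ t in Icc (-1) 1, f t * (max (1 - t ^ 2) 0) ^ p := by
        refine setIntegral_congr_fun measurableSet_Icc fun t ht ↦ ?_
        have : 0 ≤ 1 - t ^ 2 := by nlinarith [ht.1, ht.2]
        simp only [ENNReal.toReal_ofReal (rpow_nonneg this p), max_eq_left this, smul_eq_mul,
          mul_comm]
    _ = ∫ t, f t * (max (1 - t ^ 2) 0) ^ p := by
        refine setIntegral_eq_integral_of_forall_compl_eq_zero fun t ht ↦ ?_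
        have : 1 - t ^ 2 ≤ 0 := by
          rw [sub_nonpos, one_le_sq_iff_one_le_abs]
          exact (not_le.mp fun h ↦ ht (abs_le.mp h)).le
        rw [max_eq_right this, zero_rpow hp, mul_zero]

lemma integral_mul_max_sq_sub_rpow (hp : p ≠ 0) (f : ℝ → ℝ) (u : ℝ) {r : ℝ} (hr : 0 < r) :
    ∫ s, f s * (max (r ^ 2 - (u - s) ^ 2) 0) ^ p
      = r ^ (2 * p + 1) * affineMean (gegenbauerMeasure p) f u r := by
  set F : ℝ → ℝ := fun s ↦ f s * (max (r ^ 2 - (u - s) ^ 2) 0) ^ p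
  have scale_weight (t : ℝ) :
      (max (r ^ 2 - (u - (u + r * t)) ^ 2) 0) ^ p = r ^ (2 * p) * (max (1 - t ^ 2) 0) ^ p := by
    have : max (r ^ 2 - (u - (u + r * t)) ^ 2) 0 = r ^ 2 * max (1 - t ^ 2) 0 := by
      rw [mul_max_of_nonneg _ _ (sq_nonneg r)]
      ring_nf
    rw [this, mul_rpow (sq_nonneg r) (le_max_right _ _), rpow_mul hr.le, rpow_two]
  calc ∫ s, F s = ∫ s, F (u + s) := (integral_add_left_eq_self F u).symm
    _ = r * ∫ t, F (u + r * t) := by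
        rw [Measure.integral_comp_mul_left (fun s ↦ F (u + s)), abs_of_pos (inv_pos.mpr hr),
          smul_eq_mul, mul_inv_cancel_left₀ hr.ne']
    _ = r * ∫ t, r ^ (2 * p) * (f (u + r * t) * (max (1 - t ^ 2) 0) ^ p) := by
        congr 2 with t
        rw [← mul_left_comm, ← scale_weight]
    _ = r ^ (2 * p + 1) * affineMean (gegenbauerMeasure p) f u r := by
        rw [integral_const_mul, affineMean, integral_gegenbauerMeasure hp, rpow_add_one hr.ne']
        ring

end GegenbauerMeasure

section Entropy

variable {γ ρ : ℝ}

/-- The measure `(1 - t²)^λ dt` on `[-1, 1]` with the exponent `λ = (3 - γ) / (2(γ - 1))` of the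
entropy kernel. -/
abbrev kineticMeasure (γ : ℝ) : Measure ℝ := gegenbauerMeasure ((3 - γ) / (2 * (γ - 1)))

lemma isFiniteMeasure_kineticMeasure (hγ : 1 < γ) : IsFiniteMeasure (kineticMeasure γ) := by
  refine isFiniteMeasure_gegenbauerMeasure ?_
  rw [lt_div_iff₀ (by linarith)]
  linarith

lemma etaCheck_eq_mul_affineMean (hγ : 1 < γ) (hγ3 : γ ≠ 3) (hρ : 0 < ρ) (m : ℝ) :
    etaCheck γ ρ m
      = ρ * affineMean (kineticMeasure γ) halfMulAbs (m / ρ) (ρ ^ ((γ - 1) / 2)) := by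
  have hγ1 : γ - 1 ≠ 0 := by linarith
  have exponent_ne_zero : (3 - γ) / (2 * (γ - 1)) ≠ 0 :=
    div_ne_zero (sub_ne_zero.mpr hγ3.symm) (by simpa using hγ1)
  have sq_sound : (ρ ^ ((γ - 1) / 2)) ^ 2 = ρ ^ (γ - 1) := by
    rw [← rpow_mul_natCast hρ.le]
    norm_num
  have jacobian : (ρ ^ ((γ - 1) / 2)) ^ (2 * ((3 - γ) / (2 * (γ - 1))) + 1) = ρ := by
    rw [← rpow_mul hρ.le]
    convert rpow_one ρ
    field_simp
    ring
  have := integral_mul_max_sq_sub_rpow exponent_ne_zero halfMulAbs (m / ρ)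
    (rpow_pos_of_pos hρ ((γ - 1) / 2))
  rwa [sq_sound, jacobian] at this

lemma differentiableAt_uncurry_etaCheck (hγ : 1 < γ) (hγ3 : γ ≠ 3) (hρ : 0 < ρ) (m : ℝ) :
    DifferentiableAt ℝ (fun q : ℝ × ℝ ↦ etaCheck γ q.1 q.2) (ρ, m) := by
  have := isFiniteMeasure_kineticMeasure hγ
  have eventuallyEq : (fun q : ℝ × ℝ ↦ etaCheck γ q.1 q.2) =ᶠ[𝓝 (ρ, m)] fun q ↦
      q.1 * affineMean (kineticMeasure γ) halfMulAbs (q.2 / q.1) (q.1 ^ ((γ - 1) / 2)) := by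
    filter_upwards [continuousAt_fst.eventually_const_lt hρ] with q hq
    exact etaCheck_eq_mul_affineMean hγ hγ3 hq q.2
  have velocity_sound : DifferentiableAt ℝ
      (fun q : ℝ × ℝ ↦ (q.2 / q.1, q.1 ^ ((γ - 1) / 2))) (ρ, m) := by
    fun_prop (disch := simp [hρ.ne'])
  exact (differentiableAt_fst.mul ((differentiableAt_affineMean_halfMulAbs
    (ae_abs_le_one_gegenbauerMeasure _) _).comp _ velocity_sound)).congr_of_eventuallyEq
      eventuallyEq

lemma Gfun_eq_deriv (hγ : 1 < γ) (hγ3 : γ ≠ 3) (hρ : 0 < ρ) (u : ℝ) :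
    Gfun γ ρ u = deriv (fun x ↦ etaCheck γ x (x * u)) ρ := by
  have hη := (differentiableAt_uncurry_etaCheck hγ hγ3 hρ (ρ * u)).hasFDerivAt
  have hdensity := hη.comp_hasDerivAt ρ ((hasDerivAt_id' ρ).prodMk (hasDerivAt_const ρ (ρ * u)))
  have hmomentum := hη.comp_hasDerivAt (ρ * u)
    ((hasDerivAt_const (ρ * u) ρ).prodMk (hasDerivAt_id' (ρ * u)))
  have hray := hη.comp_hasDerivAt ρ ((hasDerivAt_id' ρ).prodMk ((hasDerivAt_id' ρ).mul_const u))
  have direction : ((1, 1 * u) : ℝ × ℝ) = (1, 0) + u • (0, 1) := by simp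
  rw [direction, map_add, map_smul, smul_eq_mul, ← hdensity.deriv, ← hmomentum.deriv] at hray
  exact hray.deriv.symm

lemma Gfun_eq_kineticMean (hγ : 1 < γ) (hγ3 : γ ≠ 3) (hρ : 0 < ρ) (u : ℝ) :
    Gfun γ ρ u = kineticMean (kineticMeasure γ) ((γ - 1) / 2) u (ρ ^ ((γ - 1) / 2)) := by
  have := isFiniteMeasure_kineticMeasure hγ
  have hμ := ae_abs_le_one_gegenbauerMeasure ((3 - γ) / (2 * (γ - 1)))
  have eventuallyEq : (fun x ↦ etaCheck γ x (x * u)) =ᶠ[𝓝 ρ] fun x ↦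
      x * affineMean (kineticMeasure γ) halfMulAbs u (x ^ ((γ - 1) / 2)) := by
    filter_upwards [lt_mem_nhds hρ] with x hx
    rw [etaCheck_eq_mul_affineMean hγ hγ3 hx, mul_div_cancel_left₀ u hx.ne']
  have hE := (hasDerivAt_affineMean_halfMulAbs_right hμ u (ρ ^ ((γ - 1) / 2))).comp ρ
    (Real.hasDerivAt_rpow_const (.inl hρ.ne'))
  rw [Gfun_eq_deriv hγ hγ3 hρ, eventuallyEq.deriv_eq, ← affineMean_add_mul_integral hμ]
  refine ((hasDerivAt_id' ρ).mul hE).deriv.trans ?_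
  rw [Function.comp_apply, rpow_sub_one hρ.ne']
  field_simp

lemma abs_deriv_Gfun_velocity_le (hγ : 1 < γ) (hγ3 : γ ≠ 3) (hρ : 0 < ρ) (u : ℝ) :
    |deriv (fun v ↦ Gfun γ ρ v) u| ≤ (1 + 3 * ((γ - 1) / 2)) * (kineticMeasure γ).real univ
      * (|u| + ρ ^ ((γ - 1) / 2)) := by
  have := isFiniteMeasure_kineticMeasure hγ
  have hr := rpow_pos_of_pos hρ ((γ - 1) / 2)
  simp only [Gfun_eq_kineticMean hγ hγ3 hρ]
  simpa only [abs_of_pos hr] using abs_deriv_kineticMean_left_le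
    (ae_abs_le_one_gegenbauerMeasure _) (by linarith) u hr.ne'

lemma abs_deriv_Gfun_density_le (hγ : 1 < γ) (hγ3 : γ ≠ 3) (hρ : 0 < ρ) (u : ℝ) :
    |deriv (fun x ↦ Gfun γ x u) ρ| ≤ (1 + 3 * ((γ - 1) / 2)) * (kineticMeasure γ).real univ
      * ((γ - 1) / 2) * (ρ ^ ((γ - 1) / 2 - 1) * |u| + ρ ^ (γ - 1 - 1)) := by
  have := isFiniteMeasure_kineticMeasure hγ
  have hμ := ae_abs_le_one_gegenbauerMeasure ((3 - γ) / (2 * (γ - 1)))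
  set θ := (γ - 1) / 2 with hθ
  have hθ0 : 0 ≤ θ := by linarith
  have hr := rpow_pos_of_pos hρ θ
  have eventuallyEq : (fun x ↦ Gfun γ x u) =ᶠ[𝓝 ρ]
      kineticMean (kineticMeasure γ) θ u ∘ fun x ↦ x ^ θ := by
    filter_upwards [lt_mem_nhds hρ] with x hx using Gfun_eq_kineticMean hγ hγ3 hx u
  have chain := ((hasDerivAt_kineticMean_right hμ θ u hr.ne').differentiableAt.hasDerivAt.comp ρ
    (Real.hasDerivAt_rpow_const (.inl hρ.ne'))).deriv
  have hpow : ρ ^ θ * ρ ^ (θ - 1) = ρ ^ (γ - 1 - 1) := by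
    rw [← rpow_add hρ]
    congr 1
    rw [hθ]
    ring
  have hd : 0 ≤ θ * ρ ^ (θ - 1) := by positivity
  have bound := abs_deriv_kineticMean_right_le hμ hθ0 u hr.ne'
  rw [abs_of_pos hr] at bound
  rw [eventuallyEq.deriv_eq, chain, abs_mul, abs_of_nonneg hd, ← hpow]
  exact (mul_le_mul_of_nonneg_right bound hd).trans_eq (by ring)

-- Since `0 ^ 0 = 1`, the integrand at `γ = 3` is `½ s|s|` on all of `ℝ`: the integral is junk.
lemma etaCheck_three (ρ m : ℝ) : etaCheck 3 ρ m = 0 := by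
  refine integral_undef fun h ↦ ?_
  have : IntegrableOn (fun _ : ℝ ↦ (1 / 2 : ℝ)) (Ioi 1) := by
    refine h.norm.integrableOn.mono' (by fun_prop) ?_
    filter_upwards [ae_restrict_mem measurableSet_Ioi] with s (hs : 1 < s)
    norm_num [abs_of_pos (one_pos.trans hs)]
    nlinarith
  simp [integrableOn_const_iff] at this

lemma Gfun_three (ρ u : ℝ) : Gfun 3 ρ u = 0 := by
  simp [Gfun, etaCheckRho, etaCheckM, etaCheck_three]

end Entropy

/-- there is `M > 0` depending only on `γ` such that
`|∂_ρ G| ≤ M(ρ^{θ−1}|u| + ρ^{2θ−1})` and `|∂_u G| ≤ M(|u| + ρ^θ)` for all `ρ > 0`, `u ∈ ℝ`,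
where `θ = (γ−1)/2`. -/
theorem G_derivative_bounds (γ : ℝ) (hγ : 1 < γ) :
    ∃ M : ℝ, 0 < M ∧ ∀ ρ : ℝ, 0 < ρ → ∀ u : ℝ,
      |deriv (fun x => Gfun γ x u) ρ|
          ≤ M * (ρ ^ ((γ - 1) / 2 - 1) * |u| + ρ ^ (γ - 1 - 1)) ∧
      |deriv (fun v => Gfun γ ρ v) u| ≤ M * (|u| + ρ ^ ((γ - 1) / 2)) := by
  rcases eq_or_ne γ 3 with rfl | hγ3
  · refine ⟨1, one_pos, fun ρ hρ u ↦ ?_⟩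
    simp only [Gfun_three, deriv_const, abs_zero, one_mul]
    constructor <;> positivity
  have hθ : 0 < (γ - 1) / 2 := by linarith
  set C := (1 + 3 * ((γ - 1) / 2)) * (kineticMeasure γ).real univ
  have hC : 0 ≤ C := by positivity
  refine ⟨C * ((γ - 1) / 2) + C + 1, by positivity, fun ρ hρ u ↦ ⟨?_, ?_⟩⟩
  · refine (abs_deriv_Gfun_density_le hγ hγ3 hρ u).trans ?_
    gcongr
    change C * ((γ - 1) / 2) ≤ _
    linarith
  · refine (abs_deriv_Gfun_velocity_le hγ hγ3 hρ u).trans ?_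
    gcongr
    change C ≤ _
    linarith [mul_nonneg hC hθ.le]
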